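/- arXiv:2401.04895 — 5 statements merged into one kernel-verified Lean document; each statement's English description precedes it below -/
import Mathlib

section
/- Fix an integer n ≥ 1. Let Ω ∈ τ_s(ℍ_s^n) be a slice-open set. Then for every path γ ∈ 𝒫(ℂ^n, Ω) one has r_{γ,Ω} > 0; that is, there exists a real number r > 0 such that B_{𝒫(ℂ^n)}(γ, r) ⊆ 𝒫(ℂ^n, Ω). -/
open scoped ENNReal NNReal

noncomputable section

/-- The real quaternions. -/
abbrev ℍ := Quaternion ℝ

/-- The set `𝕊` of imaginary units of the quaternions. -/
def QS : Set ℍ := {I | I ^ 2 = -1}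

/-- `Ψ_i^I : ℂ^n → ℂ_I^n ⊆ ℍ^n`, sending `x + y i` to `x + y I` componentwise. -/
def PsiI (n : ℕ) (I : ℍ) (z : Fin n → ℂ) : Fin n → ℍ :=
  fun ℓ => algebraMap ℝ ℍ (z ℓ).re + (z ℓ).im • I

/-- The slice `ℂ_I^n = (ℝ + ℝ I)^n ⊆ ℍ^n`. -/
def sliceCn (n : ℕ) (I : ℍ) : Set (Fin n → ℍ) := Set.range (PsiI n I)

/-- The weakly slice cone `ℍ_s^n = ⋃_{I ∈ 𝕊} ℂ_I^n`. -/
def weakSliceCone (n : ℕ) : Set (Fin n → ℍ) := ⋃ I ∈ QS, sliceCn n I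

/-- `Ω` is slice open (i.e. `Ω ∈ τ_s(ℍ_s^n)`): `Ω ⊆ ℍ_s^n` and each slice
`Ω_I = Ω ∩ ℂ_I^n` is open in `ℂ_I^n`, encoded via the homeomorphism `Ψ_i^I`. -/
def sliceOpen (n : ℕ) (Ω : Set (Fin n → ℍ)) : Prop :=
  Ω ⊆ weakSliceCone n ∧ ∀ I ∈ QS, IsOpen (PsiI n I ⁻¹' Ω)

/-- The set `𝒫(ℂ^n)` of continuous paths `[0,1] → ℂ^n` with real start point,
encoded as functions `ℝ → ℂ^n` continuous on `[0,1]`. -/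
def PathsC (n : ℕ) : Set (ℝ → Fin n → ℂ) :=
  {γ | ContinuousOn γ (Set.Icc 0 1) ∧ ∀ ℓ, (γ 0 ℓ).im = 0}

/-- `γ^I([0,1]) ⊆ Ω`. -/
def pathInSlice (n : ℕ) (Ω : Set (Fin n → ℍ)) (I : ℍ) (γ : ℝ → Fin n → ℂ) : Prop :=
  ∀ t ∈ Set.Icc (0 : ℝ) 1, PsiI n I (γ t) ∈ Ω

/-- The set `𝕊(Ω, γ) = {I ∈ 𝕊 : γ^I ⊆ Ω}`. -/
def sliceUnits (n : ℕ) (Ω : Set (Fin n → ℍ)) (γ : ℝ → Fin n → ℂ) : Set ℍ :=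
  {I | I ∈ QS ∧ pathInSlice n Ω I γ}

/-- The set `𝒫(ℂ^n, Ω)`. -/
def PathsIn (n : ℕ) (Ω : Set (Fin n → ℍ)) : Set (ℝ → Fin n → ℂ) :=
  {γ | γ ∈ PathsC n ∧ ∃ I, I ∈ sliceUnits n Ω γ}

/-- The straight segment `𝓛_z^w(t) = (1 - t)z + tw`. -/
def segPath (n : ℕ) (z w : Fin n → ℂ) : ℝ → Fin n → ℂ :=
  fun t => (1 - t) • z + t • w

/-- Concatenation of paths. -/
def concatP (n : ℕ) (γ δ : ℝ → Fin n → ℂ) : ℝ → Fin n → ℂ :=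
  fun t => if t ≤ 1 / 2 then γ (2 * t) else δ (2 * t - 1)

/-- `𝓛_γ(z) := γ ∘ 𝓛_{γ(1)}^z`, the extension of `γ` by the segment from `γ(1)` to `z`. -/
def extendPath (n : ℕ) (γ : ℝ → Fin n → ℂ) (z : Fin n → ℂ) : ℝ → Fin n → ℂ :=
  concatP n γ (segPath n (γ 1) z)

/-- The ball `B_{𝒫(ℂ^n)}(γ, r)` in path space. -/
def pathBall (n : ℕ) (γ : ℝ → Fin n → ℂ) (r : ℝ) : Set (ℝ → Fin n → ℂ) :=
  {β | ∃ z ∈ Metric.ball (γ 1) r, β = extendPath n γ z}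

/-- `B_I(c^I, r) ⊆ Ω_I`, encoded via `Ψ_i^I`. -/
def ballInSlice (n : ℕ) (Ω : Set (Fin n → ℍ)) (I : ℍ) (c : Fin n → ℂ) (r : ℝ) : Prop :=
  ∀ w ∈ Metric.ball c r, PsiI n I w ∈ Ω

/-- `r_{γ,Ω}`, as an extended nonnegative real. -/
def rPath (n : ℕ) (Ω : Set (Fin n → ℍ)) (γ : ℝ → Fin n → ℂ) : ℝ≥0∞ :=
  sSup {x : ℝ≥0∞ | ∃ r : ℝ≥0, x = r ∧ pathBall n γ r ⊆ PathsIn n Ω}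

/-- `r^{𝕊'}_{γ,Ω}`, as an extended nonnegative real. -/
def rSliceSet (n : ℕ) (Ω : Set (Fin n → ℍ)) (γ : ℝ → Fin n → ℂ) (S' : Set ℍ) : ℝ≥0∞ :=
  sSup {x : ℝ≥0∞ | ∃ r : ℝ≥0, x = r ∧ ∀ I ∈ S', ballInSlice n Ω I (γ 1) r}

/-- `r²_{γ,Ω}`, as an extended nonnegative real. -/
def r2Slice (n : ℕ) (Ω : Set (Fin n → ℍ)) (γ : ℝ → Fin n → ℂ) : ℝ≥0∞ :=
  sSup {x : ℝ≥0∞ | ∃ S'' : Set ℍ, S'' ⊆ sliceUnits n Ω γ ∧ S''.Nontrivial ∧ x = rSliceSet n Ω γ S''}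

/-- `r^I_{γ,Ω}`, as an extended nonnegative real. -/
def rISlice (n : ℕ) (Ω : Set (Fin n → ℍ)) (γ : ℝ → Fin n → ℂ) (I : ℍ) : ℝ≥0∞ :=
  sSup {x : ℝ≥0∞ | ∃ r : ℝ≥0, x = r ∧ ballInSlice n Ω I (γ 1) r}

/-- `Ω` is real-path-connected. -/
def realPathConnected (n : ℕ) (Ω : Set (Fin n → ℍ)) : Prop :=
  ∀ q ∈ Ω, ∃ γ ∈ PathsIn n Ω, ∃ I ∈ sliceUnits n Ω γ, PsiI n I (γ 1) = q

/-- `Ω₂` is `Ω₁`-stem-preserving. -/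
def stemPreserving (n : ℕ) (Ω₁ Ω₂ : Set (Fin n → ℍ)) : Prop :=
  (∀ γ ∈ PathsIn n Ω₁, (sliceUnits n Ω₂ γ).Nontrivial) ∧
  (∀ α ∈ PathsIn n Ω₁, ∀ β ∈ PathsIn n Ω₁, α 1 = β 1 →
    ¬ ∃ I, sliceUnits n Ω₂ α ∩ sliceUnits n Ω₂ β = {I})

/-- `F : 𝒫(ℂ^n, Ω) → ℍ^{2×1}` is a (path-slice) stem function of `f`:
`f(γ^I(1)) = (1, I)·F(γ)`. -/
def isStemOf (n : ℕ) (Ω : Set (Fin n → ℍ)) (f : (Fin n → ℍ) → ℍ)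
    (F : (ℝ → Fin n → ℂ) → ℍ × ℍ) : Prop :=
  ∀ γ ∈ PathsIn n Ω, ∀ I ∈ sliceUnits n Ω γ, f (PsiI n I (γ 1)) = (F γ).1 + I * (F γ).2

/-- `f` is a path-slice function on `Ω`. -/
def PathSliceFn (n : ℕ) (Ω : Set (Fin n → ℍ)) (f : (Fin n → ℍ) → ℍ) : Prop :=
  ∃ F, isStemOf n Ω f F

/-- `f` is (weakly) slice regular on `Ω`: each restriction `f_I` is real differentiable
and satisfies the Cauchy-Riemann equations `(∂/∂x_ℓ + I ∂/∂y_ℓ) f_I = 0`. -/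
def SliceRegular (n : ℕ) (Ω : Set (Fin n → ℍ)) (f : (Fin n → ℍ) → ℍ) : Prop :=
  ∀ I ∈ QS,
    DifferentiableOn ℝ (fun z => f (PsiI n I z)) (PsiI n I ⁻¹' Ω) ∧
    ∀ z ∈ PsiI n I ⁻¹' Ω, ∀ ℓ : Fin n,
      fderivWithin ℝ (fun z => f (PsiI n I z)) (PsiI n I ⁻¹' Ω) z (Pi.single ℓ 1)
        + I * fderivWithin ℝ (fun z => f (PsiI n I z)) (PsiI n I ⁻¹' Ω) z
            (Pi.single ℓ Complex.I) = 0

open Classical in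
/-- `F_{Ω₁}^f` : a choice of stem function of the path-slice function `f : Ω₂ → ℍ`
(its restriction to `𝒫(ℂ^n, Ω₁)` is independent of the choice). -/
def stemF (n : ℕ) (Ω₂ : Set (Fin n → ℍ)) (f : (Fin n → ℍ) → ℍ) :
    (ℝ → Fin n → ℂ) → ℍ × ℍ :=
  if h : ∃ F, isStemOf n Ω₂ f F then h.choose else fun _ => 0

open Classical in
/-- The map `ℑ : ℍ_s^n → 𝕊 ∪ {0}`. -/
def scrI {n : ℕ} (q : Fin n → ℍ) : ℍ :=
  if h : (Finset.univ.filter fun ℓ : Fin n => Quaternion.im (q ℓ) ≠ 0).Nonempty then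
    ‖Quaternion.im (q ((Finset.univ.filter
        fun ℓ : Fin n => Quaternion.im (q ℓ) ≠ 0).min' h))‖⁻¹ •
      Quaternion.im (q ((Finset.univ.filter
        fun ℓ : Fin n => Quaternion.im (q ℓ) ≠ 0).min' h))
  else 0

open Classical in
/-- The map `ℱ_{Ω₁}^g : Ω₁ → ℍ^{2×1}`. -/
def scrF (n : ℕ) (Ω₁ Ω₂ : Set (Fin n → ℍ)) (g : (Fin n → ℍ) → ℍ) (q : Fin n → ℍ) :
    ℍ × ℍ :=
  if h : (∃ ℓ, Quaternion.im (q ℓ) ≠ 0) ∧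
      ∃ γ, γ ∈ PathsIn n Ω₁ ∧ pathInSlice n Ω₁ (scrI q) γ ∧ PsiI n (scrI q) (γ 1) = q then
    stemF n Ω₂ g h.2.choose
  else (g q, 0)

/-- The `*`-product `(f*g)(q) = (f(q), ℑ(q)f(q))·ℱ_{Ω₁}^g(q)`. -/
def starProd (n : ℕ) (Ω₁ Ω₂ : Set (Fin n → ℍ)) (f g : (Fin n → ℍ) → ℍ) :
    (Fin n → ℍ) → ℍ :=
  fun q => f q * (scrF n Ω₁ Ω₂ g q).1 + scrI q * f q * (scrF n Ω₁ Ω₂ g q).2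

/-- Componentwise complex conjugate of a path. -/
def conjPath (n : ℕ) (γ : ℝ → Fin n → ℂ) : ℝ → Fin n → ℂ :=
  fun t ℓ => starRingEnd ℂ (γ t ℓ)

end

theorem statement0 (n : ℕ) (hn : 1 ≤ n) (Ω : Set (Fin n → ℍ)) (hΩ : sliceOpen n Ω)
    (γ : ℝ → Fin n → ℂ) (hγ : γ ∈ PathsIn n Ω) :
    0 < rPath n Ω γ ∧ ∃ r : ℝ, 0 < r ∧ pathBall n γ r ⊆ PathsIn n Ω := by
  obtain ⟨⟨hc, h0⟩, I, hI, hin⟩ := hγ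
  obtain ⟨r, hr, hball⟩ := Metric.isOpen_iff.mp (hΩ.2 I hI) (γ 1)
    (hin 1 ⟨zero_le_one, le_rfl⟩)
  have key : pathBall n γ r ⊆ PathsIn n Ω := by
    rintro β ⟨z, hz, rfl⟩
    refine ⟨⟨?_, ?_⟩, I, hI, ?_⟩
    · unfold extendPath concatP
      apply ContinuousOn.if
      · rintro t ⟨-, ht⟩
        have ht' : t = 1 / 2 := by
          have := frontier_le_subset_eq (f := fun t : ℝ => t) (g := fun _ => (1 / 2 : ℝ))
            continuous_id continuous_const ht
          simpa using this
        subst ht'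
        norm_num [segPath]
      · have : closure {t : ℝ | t ≤ 1 / 2} = {t : ℝ | t ≤ 1 / 2} :=
          (isClosed_le continuous_id continuous_const).closure_eq
        rw [this]
        refine hc.comp (by fun_prop) ?_
        rintro t ⟨⟨h1, h2⟩, h3⟩
        simp only [Set.mem_ofPred_eq] at h3
        constructor <;> linarith
      · unfold segPath
        fun_prop
    · intro ℓ
      simpa [extendPath, concatP] using h0 ℓ
    · rintro t ⟨ht0, ht1⟩
      unfold extendPath concatP
      split_ifs with h
      · exact hin _ ⟨by linarith, by linarith⟩
      · push Not at h
        apply hball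
        exact (convex_ball (γ 1) r) (Metric.mem_ball_self hr) hz (by linarith) (by linarith)
          (by ring)
  refine ⟨?_, r, hr, key⟩
  lift r to ℝ≥0 using hr.le
  exact lt_of_lt_of_le (ENNReal.coe_pos.mpr (by exact_mod_cast hr)) (le_sSup ⟨r, rfl, key⟩)
end

section
/- Fix an integer n ≥ 1. Let Ω₁ ∈ τ_s(ℍ_s^n) be real-path-connected, let Ω₂ ∈ τ_s(ℍ_s^n) be Ω₁-stem-preserving, let γ ∈ 𝒫(ℂ^n, Ω₁), and let r₁ be a real number with 0 < r₁ < min{r²_{γ,Ω₂}, r_{γ,Ω₁}}. Then B_{𝒫(ℂ^n)}(γ, r₁) ⊆ 𝒫(ℂ^n, Ω₁), and there exist two distinct elements I, J ∈ 𝕊(Ω₂, γ) such that for every β ∈ B_{𝒫(ℂ^n)}(γ, r₁) one has β^I([0,1]) ⊆ Ω₂ and β^J([0,1]) ⊆ Ω₂. -/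
open scoped ENNReal NNReal

/-- If the path and a ball around its endpoint lie in `Ω` on the slice `I`, so does every
extension of the path by a segment inside the ball. -/
theorem extendPath_inSlice (n : ℕ) (Ω : Set (Fin n → ℍ)) (I : ℍ) (γ : ℝ → Fin n → ℂ) (r : ℝ)
    (hγ : pathInSlice n Ω I γ) (hb : ballInSlice n Ω I (γ 1) r)
    (z : Fin n → ℂ) (hz : z ∈ Metric.ball (γ 1) r) :
    pathInSlice n Ω I (extendPath n γ z) := by
  intro t ht
  obtain ⟨h0, h1⟩ := ht
  unfold extendPath concatP
  split_ifs with h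
  · exact hγ _ ⟨by linarith, by linarith⟩
  · have hr : 0 < r := Metric.pos_of_mem_ball hz
    refine hb _ ((convex_ball (γ 1) r) (Metric.mem_ball_self hr) hz ?_ ?_ ?_)
    · linarith
    · linarith
    · ring

theorem statement2 (n : ℕ) (hn : 1 ≤ n) (Ω₁ Ω₂ : Set (Fin n → ℍ))
    (hΩ₁ : sliceOpen n Ω₁) (hrc : realPathConnected n Ω₁)
    (hΩ₂ : sliceOpen n Ω₂) (hsp : stemPreserving n Ω₁ Ω₂)
    (γ : ℝ → Fin n → ℂ) (hγ : γ ∈ PathsIn n Ω₁)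
    (r₁ : ℝ) (hr₁ : 0 < r₁)
    (hlt : ENNReal.ofReal r₁ < min (r2Slice n Ω₂ γ) (rPath n Ω₁ γ)) :
    pathBall n γ r₁ ⊆ PathsIn n Ω₁ ∧
      ∃ I ∈ sliceUnits n Ω₂ γ, ∃ J ∈ sliceUnits n Ω₂ γ, I ≠ J ∧
        ∀ β ∈ pathBall n γ r₁, pathInSlice n Ω₂ I β ∧ pathInSlice n Ω₂ J β := by
  obtain ⟨h2, hP⟩ := lt_min_iff.1 hlt
  constructor
  · obtain ⟨x, ⟨r, rfl, hr⟩, hx⟩ := lt_sSup_iff.1 hP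
    have hle : r₁ ≤ r := by
      rw [← ENNReal.ofReal_coe_nnreal] at hx
      exact ((ENNReal.ofReal_lt_ofReal_iff_of_nonneg hr₁.le).1 hx).le
    rintro β ⟨z, hz, rfl⟩
    exact hr ⟨z, Metric.ball_subset_ball hle hz, rfl⟩
  · obtain ⟨x, ⟨S, hS, ⟨I, hI, J, hJ, hIJ⟩, rfl⟩, hx⟩ := lt_sSup_iff.1 h2
    obtain ⟨y, ⟨r, rfl, hr⟩, hy⟩ := lt_sSup_iff.1 hx
    have hle : r₁ ≤ r := by
      rw [← ENNReal.ofReal_coe_nnreal] at hy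
      exact ((ENNReal.ofReal_lt_ofReal_iff_of_nonneg hr₁.le).1 hy).le
    refine ⟨I, hS hI, J, hS hJ, hIJ, ?_⟩
    rintro β ⟨z, hz, rfl⟩
    have hz' := Metric.ball_subset_ball hle hz
    exact ⟨extendPath_inSlice n Ω₂ I γ r (hS hI).2 (hr I hI) z hz',
      extendPath_inSlice n Ω₂ J γ r (hS hJ).2 (hr J hJ) z hz'⟩
end

section
/- Fix an integer n ≥ 1. Let Ω₁ ∈ τ_s(ℍ_s^n) be real-path-connected, let Ω₂ ∈ τ_s(ℍ_s^n) be Ω₁-stem-preserving, let γ ∈ 𝒫(ℂ^n, Ω₁), and let f ∈ 𝒮ℛ(Ω₂). Let r₁ be a real number with 0 < r₁ < min{r²_{γ,Ω₂}, r_{γ,Ω₁}}, and let I, J ∈ 𝕊(Ω₂, γ) be distinct elements such that β^I([0,1]) ⊆ Ω₂ and β^J([0,1]) ⊆ Ω₂ for every β ∈ B_{𝒫(ℂ^n)}(γ, r₁) ⊆ 𝒫(ℂ^n, Ω₁). Then for every z ∈ B_{ℂ^n}(γ(1), r₁), the value F_{Ω₁}^f(𝓛_γ(z)) ∈ ℍ^{2×1}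 is the unique solution of the system (1, I)·F = f(Ψ_i^I(z)), (1, J)·F = f(Ψ_i^J(z)); explicitly, writing F_{Ω₁}^f(𝓛_γ(z)) = (F₁, F₂)^T, one has F₂ = (J − I)^{-1}(f(Ψ_i^J(z)) − f(Ψ_i^I(z))) and F₁ = f(Ψ_i^I(z)) − I·F₂. -/
open scoped ENNReal NNReal

section helpers
open Filter Topology

lemma line_vanish {E F : Type*} [NormedAddCommGroup E] [NormedSpace ℂ E]
    [NormedAddCommGroup F] [NormedSpace ℂ F] [CompleteSpace F]
    (g : E → F) (B : Set E) (hBo : IsOpen B) (hBc : Convex ℝ B)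
    (hg : DifferentiableOn ℂ g B) (w v : E) (hw : w ∈ B)
    (hfr : ∃ᶠ ζ in 𝓝[≠] (0 : ℂ), g (w + ζ • v) = 0) (a : ℂ) (ha : w + a • v ∈ B) :
    g (w + a • v) = 0 := by
  set D : Set ℂ := (fun ζ : ℂ => w + ζ • v) ⁻¹' B with hD
  have hcont : Continuous (fun ζ : ℂ => w + ζ • v) := by fun_prop
  have hDo : IsOpen D := hBo.preimage hcont
  have hDc : Convex ℝ D := by
    intro x hx y hy s t hs ht hst
    have h := hBc hx hy hs ht hst
    change w + (s • x + t • y) • v ∈ B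
    have e : s • (w + x • v) + t • (w + y • v) = w + (s • x + t • y) • v := by
      rw [smul_add, smul_add, add_smul, smul_assoc, smul_assoc]
      have : w = s • w + t • w := by rw [← add_smul, hst, one_smul]
      nth_rewrite 3 [this]
      abel
    rw [← e]; exact h
  have hdiff : DifferentiableOn ℂ (fun ζ : ℂ => g (w + ζ • v)) D := by
    refine hg.comp (f := fun ζ : ℂ => w + ζ • v) ?_ (fun ζ h => h)
    fun_prop
  have han := hdiff.analyticOnNhd hDo
  have h0 : (0 : ℂ) ∈ D := by simpa [hD] using hw
  exact han.eqOn_zero_of_preconnected_of_frequently_eq_zero hDc.isPreconnected h0 hfr ha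

lemma path_vanish {n : ℕ} {F : Type*}
    [NormedAddCommGroup F] [NormedSpace ℂ F] [CompleteSpace F]
    (g : (Fin n → ℂ) → F) (U : Set (Fin n → ℂ)) (hU : IsOpen U)
    (hg : DifferentiableOn ℂ g U)
    (hreal : ∀ x ∈ U, (∀ l, (x l).im = 0) → g x = 0)
    (γ : ℝ → Fin n → ℂ) (hγ : γ ∈ PathsC n) (hγU : ∀ t ∈ Set.Icc (0 : ℝ) 1, γ t ∈ U) :
    g (γ 1) = 0 := by
  set V : Set (Fin n → ℂ) := {z | ∀ᶠ w in 𝓝 z, g w = 0} with hV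
  have hVo : IsOpen V := isOpen_setOf_eventually_nhds
  have hpre : IsPreconnected (γ '' Set.Icc (0 : ℝ) 1) :=
    isPreconnected_Icc.image γ hγ.1
  have hsub : γ '' Set.Icc (0 : ℝ) 1 ⊆ V := by
    refine hpre.subset_of_closure_inter_subset hVo ?_ ?_
    · refine ⟨γ 0, ⟨0, by simp, rfl⟩, ?_⟩
      obtain ⟨r, hr, hrU⟩ := Metric.isOpen_iff.1 hU (γ 0) (hγU 0 (by simp))
      refine Filter.mem_of_superset (Metric.ball_mem_nhds _ hr) ?_
      intro z hz
      set x : Fin n → ℂ := fun l => ((z l).re : ℂ) with hx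
      set y : Fin n → ℂ := fun l => ((z l).im : ℂ) with hy
      have hz' : z = x + Complex.I • y := by
        funext l
        simp only [hx, hy, Pi.add_apply, Pi.smul_apply, smul_eq_mul]
        rw [mul_comm]; exact (Complex.re_add_im (z l)).symm
      have hxB : x ∈ Metric.ball (γ 0) r := by
        rw [Metric.mem_ball] at hz ⊢
        refine lt_of_le_of_lt ?_ hz
        refine (dist_pi_le_iff dist_nonneg).2 fun l => ?_
        refine le_trans ?_ (dist_le_pi_dist z (γ 0) l)
        have e : x l - γ 0 l = (((z l - γ 0 l).re : ℝ) : ℂ) := by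
          apply Complex.ext <;> simp [hx, hγ.2 l]
        rw [dist_eq_norm, dist_eq_norm, e, Complex.norm_real]
        exact Complex.abs_re_le_norm _
      change g z = 0
      rw [hz']
      refine line_vanish g _ Metric.isOpen_ball (convex_ball _ _) (hg.mono hrU) x y hxB ?_ _
        (hz' ▸ hz)
      have hev : ∀ᶠ s : ℝ in 𝓝 (0 : ℝ), g (x + ((s : ℂ)) • y) = 0 := by
        have hc : ContinuousAt (fun s : ℝ => x + (s : ℂ) • y) 0 := by fun_prop
        have : ∀ᶠ s : ℝ in 𝓝 (0 : ℝ), x + (s : ℂ) • y ∈ U := by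
          apply hc
          apply hU.mem_nhds
          simpa using hrU hxB
        filter_upwards [this] with s hs
        apply hreal _ hs
        intro l
        simp [hx, hy]
      have ht : Tendsto (fun s : ℝ => (s : ℂ)) (𝓝[≠] 0) (𝓝[≠] 0) := by
        refine tendsto_nhdsWithin_of_tendsto_nhds_of_eventually_within _ ?_ ?_
        · have : ContinuousAt (fun s : ℝ => (s : ℂ)) 0 := by fun_prop
          have h2 := this.tendsto
          simp only [Complex.ofReal_zero] at h2
          exact h2.mono_left nhdsWithin_le_nhds
        · filter_upwards [self_mem_nhdsWithin] with s hs
          simpa using hs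
      exact ht.frequently (hev.filter_mono nhdsWithin_le_nhds).frequently
    · rintro p ⟨hpc, t, ht, rfl⟩
      obtain ⟨r, hr, hrU⟩ := Metric.isOpen_iff.1 hU (γ t) (hγU t ht)
      obtain ⟨w, hwV, hwB⟩ := Metric.mem_closure_iff.1 hpc r hr
      refine Filter.mem_of_superset (Metric.ball_mem_nhds _ hr) ?_
      intro z hz
      change g z = 0
      have hz' : z = w + (1 : ℂ) • (z - w) := by simp
      rw [hz']
      refine line_vanish g _ Metric.isOpen_ball (convex_ball _ _) (hg.mono hrU) w (z - w)
        (by rwa [Metric.mem_ball, dist_comm]) ?_ _ (hz' ▸ hz)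
      have hc : ContinuousAt (fun s : ℂ => w + s • (z - w)) 0 := by fun_prop
      have hev : ∀ᶠ s in 𝓝 (0 : ℂ), g (w + s • (z - w)) = 0 := by
        have h2 := hc.tendsto
        simp only [zero_smul, add_zero] at h2
        exact h2.eventually hwV
      exact (hev.filter_mono nhdsWithin_le_nhds).frequently
  exact (hsub ⟨1, by simp, rfl⟩ : V (γ 1)).self_of_nhds

lemma QS_mul {K : ℍ} (hK : K ∈ QS) : K * K = -1 := by
  have : K ^ 2 = -1 := hK
  rwa [sq] at this

lemma QS_norm {K : ℍ} (hK : K ∈ QS) : K.re = 0 ∧ ‖K‖ = 1 := by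
  have h := QS_mul hK
  have hn : ‖K‖ = 1 := by
    have h1 : ‖K‖ * ‖K‖ = 1 := by rw [← norm_mul, h]; simp
    nlinarith [norm_nonneg K]
  refine ⟨?_, hn⟩
  have h1 := congrArg QuaternionAlgebra.re h
  have h2 : Quaternion.normSq K = 1 := by
    rw [Quaternion.normSq_eq_norm_mul_self, hn, mul_one]
  rw [Quaternion.normSq_def'] at h2
  have h3 : QuaternionAlgebra.re (-1 : ℍ) = -1 := by
    rw [Quaternion.re_neg, Quaternion.re_one]
  rw [h3, Quaternion.re_mul] at h1
  have h4 : K.re ^ 2 = 0 := by nlinarith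
  exact pow_eq_zero_iff (two_ne_zero) |>.1 h4

/-- Left multiplication embedding -/
def phiK (K : ℍ) (hK : K ∈ QS) : ℂ →+* ℍ :=
  (Complex.lift ⟨K, QS_mul hK⟩ : ℂ →ₐ[ℝ] ℍ).toRingHom

lemma phiK_apply (K : ℍ) (hK : K ∈ QS) (z : ℂ) :
    phiK K hK z = algebraMap ℝ ℍ z.re + z.im • K := by
  simp [phiK, Complex.lift]

lemma phiK_norm (K : ℍ) (hK : K ∈ QS) (z : ℂ) : ‖phiK K hK z‖ = ‖z‖ := by
  obtain ⟨h0, h1⟩ := QS_norm hK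
  have h2 : Quaternion.normSq K = 1 := by
    rw [Quaternion.normSq_eq_norm_mul_self, h1, mul_one]
  rw [Quaternion.normSq_def'] at h2
  have : ‖phiK K hK z‖ * ‖phiK K hK z‖ = ‖z‖ * ‖z‖ := by
    rw [← Quaternion.normSq_eq_norm_mul_self, Quaternion.normSq_def', phiK_apply,
      ← sq ‖z‖, ← Complex.normSq_eq_norm_sq, Complex.normSq_apply]
    simp [h0] at h2 ⊢
    linear_combination z.im ^ 2 * h2
  exact (mul_self_inj (norm_nonneg _) (norm_nonneg _)).1 this

/-- The complex normed space structure on ℍ given by left multiplication by K. -/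
noncomputable abbrev nsK (K : ℍ) (hK : K ∈ QS) : NormedSpace ℂ ℍ :=
  { Module.compHom ℍ (phiK K hK) with
    norm_smul_le := fun z q => by
      change ‖phiK K hK z * q‖ ≤ _
      rw [norm_mul, phiK_norm] }

lemma path_vanish_K {n : ℕ} (K : ℍ) (hK : K ∈ QS)
    (g : (Fin n → ℂ) → ℍ) (U : Set (Fin n → ℂ)) (hU : IsOpen U)
    (hg : ∀ z ∈ U, ∃ L : (Fin n → ℂ) →L[ℝ] ℍ, HasFDerivAt g L z ∧
      ∀ v, L (Complex.I • v) = K * L v)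
    (hreal : ∀ x ∈ U, (∀ l, (x l).im = 0) → g x = 0)
    (γ : ℝ → Fin n → ℂ) (hγ : γ ∈ PathsC n) (hγU : ∀ t ∈ Set.Icc (0 : ℝ) 1, γ t ∈ U) :
    g (γ 1) = 0 := by
  letI := nsK K hK
  have hsm : ∀ (z : ℂ) (q : ℍ), z • q = phiK K hK z * q := fun _ _ => rfl
  haveI : IsScalarTower ℝ ℂ ℍ := ⟨fun r z q => by
    rw [hsm, hsm, phiK_apply, phiK_apply]
    simp [add_mul, mul_smul, smul_mul_assoc, Algebra.algebraMap_eq_smul_one]⟩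
  refine path_vanish g U hU ?_ hreal γ hγ hγU
  intro z hz
  obtain ⟨L, hL, hLI⟩ := hg z hz
  let L' : (Fin n → ℂ) →L[ℂ] ℍ :=
    { toFun := L
      map_add' := L.map_add
      map_smul' := fun c v => by
        have : c • v = c.re • v + c.im • (Complex.I • v) := by
          funext l
          simp only [Pi.add_apply, Pi.smul_apply, smul_eq_mul, Complex.real_smul]
          nth_rewrite 1 [← Complex.re_add_im c]
          ring
        rw [this, L.map_add, L.map_smul, L.map_smul, hLI, RingHom.id_apply, hsm, phiK_apply]
        simp [add_mul, Algebra.algebraMap_eq_smul_one]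
      cont := L.continuous }
  exact (hasFDerivAt_of_restrictScalars ℝ (f' := L') hL
    (ContinuousLinearMap.ext fun _ => rfl)).differentiableAt.differentiableWithinAt

lemma PsiI_real {n : ℕ} (I : ℍ) (x : Fin n → ℂ) (hx : ∀ l, (x l).im = 0) :
    PsiI n I x = fun l => algebraMap ℝ ℍ (x l).re := by
  funext l
  simp [PsiI, hx l]

lemma sliceRegular_deriv {n : ℕ} {Ω : Set (Fin n → ℍ)} (hΩ : sliceOpen n Ω)
    {f : (Fin n → ℍ) → ℍ} (hf : SliceRegular n Ω f) {I : ℍ} (hI : I ∈ QS)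
    (z : Fin n → ℂ) (hz : z ∈ PsiI n I ⁻¹' Ω) :
    ∃ L : (Fin n → ℂ) →L[ℝ] ℍ, HasFDerivAt (fun z => f (PsiI n I z)) L z ∧
      ∀ v, L (Complex.I • v) = I * L v := by
  obtain ⟨hd, hcr⟩ := hf I hI
  have hn := (hΩ.2 I hI).mem_nhds hz
  refine ⟨_, (hd.differentiableAt hn).hasFDerivAt, ?_⟩
  have hcr := hcr z hz
  rw [fderivWithin_of_mem_nhds hn] at hcr
  set L := fderiv ℝ (fun z => f (PsiI n I z)) z
  have hII := QS_mul hI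
  have h1 : ∀ l : Fin n, L (Pi.single l Complex.I) = I * L (Pi.single l 1) := by
    intro l
    have := congrArg (fun q => I * q) (hcr l)
    simp only [mul_add, ← mul_assoc, hII, mul_zero, neg_mul, one_mul] at this
    rw [add_neg_eq_zero] at this
    exact this.symm
  have h2 : ∀ (l : Fin n) (c : ℂ),
      L (Pi.single l c) = c.re • L (Pi.single l 1) + c.im • L (Pi.single l Complex.I) := by
    intro l c
    rw [← L.map_smul, ← L.map_smul, ← L.map_add, ← Pi.single_smul, ← Pi.single_smul,
      ← Pi.single_add]
    congr 2
    simp [Complex.re_add_im]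
  intro v
  have h3 : v = ∑ l, Pi.single l (v l) := (Finset.univ_sum_single v).symm
  have h4 : Complex.I • v = ∑ l, Pi.single l (Complex.I * v l) :=
    (Finset.univ_sum_single (Complex.I • v)).symm
  rw [h4, map_sum]
  nth_rewrite 2 [h3]
  rw [map_sum, Finset.mul_sum]
  refine Finset.sum_congr rfl fun l _ => ?_
  rw [h2 l (Complex.I * v l), h2 l (v l), h1]
  simp only [mul_add, mul_smul_comm, ← mul_assoc, hII]
  simp [add_comm]

lemma three_units {n : ℕ} {Ω : Set (Fin n → ℍ)} (hΩ : sliceOpen n Ω)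
    {f : (Fin n → ℍ) → ℍ} (hf : SliceRegular n Ω f)
    (γ : ℝ → Fin n → ℂ) (hγ : γ ∈ PathsC n) {I J K : ℍ}
    (hI : I ∈ sliceUnits n Ω γ) (hJ : J ∈ sliceUnits n Ω γ) (hK : K ∈ sliceUnits n Ω γ)
    (hIJ : I ≠ J) :
    f (PsiI n K (γ 1)) = (f (PsiI n I (γ 1)) -
        I * ((J - I)⁻¹ * (f (PsiI n J (γ 1)) - f (PsiI n I (γ 1)))))
      + K * ((J - I)⁻¹ * (f (PsiI n J (γ 1)) - f (PsiI n I (γ 1)))) := by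
  have hne : J - I ≠ 0 := sub_ne_zero.2 hIJ.symm
  rw [← sub_eq_zero]
  refine path_vanish_K K hK.1 (fun z => f (PsiI n K z) - ((f (PsiI n I z) -
        I * ((J - I)⁻¹ * (f (PsiI n J z) - f (PsiI n I z))))
      + K * ((J - I)⁻¹ * (f (PsiI n J z) - f (PsiI n I z)))))
    (PsiI n I ⁻¹' Ω ∩ PsiI n J ⁻¹' Ω ∩ PsiI n K ⁻¹' Ω)
    (((hΩ.2 I hI.1).inter (hΩ.2 J hJ.1)).inter (hΩ.2 K hK.1)) ?_ ?_ γ hγ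
    (fun t ht => ⟨⟨hI.2 t ht, hJ.2 t ht⟩, hK.2 t ht⟩)
  · rintro z ⟨⟨hzI, hzJ⟩, hzK⟩
    obtain ⟨A, hA, hA'⟩ := sliceRegular_deriv hΩ hf hI.1 z hzI
    obtain ⟨B, hB, hB'⟩ := sliceRegular_deriv hΩ hf hJ.1 z hzJ
    obtain ⟨C, hC, hC'⟩ := sliceRegular_deriv hΩ hf hK.1 z hzK
    let M : ℍ → (ℍ →L[ℝ] ℍ) := fun q => ContinuousLinearMap.mul ℝ ℍ q
    have hF2 : HasFDerivAt (fun z => (J - I)⁻¹ * (f (PsiI n J z) - f (PsiI n I z)))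
        ((M (J - I)⁻¹).comp (B - A)) z :=
      (M (J - I)⁻¹).hasFDerivAt.comp z (hB.sub hA)
    have hIF2 := (M I).hasFDerivAt.comp z hF2
    have hKF2 := (M K).hasFDerivAt.comp z hF2
    refine ⟨_, hC.sub ((hA.sub hIF2).add hKF2), ?_⟩
    intro v
    have hII := QS_mul hI.1
    have hJJ := QS_mul hJ.1
    have hKK := QS_mul hK.1
    simp only [M, ContinuousLinearMap.sub_apply, ContinuousLinearMap.add_apply,
      ContinuousLinearMap.comp_apply, ContinuousLinearMap.mul_apply', hA', hB', hC']
    set a := A v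
    set b := B v
    obtain ⟨q, hq⟩ : ∃ q, q = (J - I)⁻¹ * (b - a) := ⟨_, rfl⟩
    obtain ⟨p, hp⟩ : ∃ p, p = a - I * q := ⟨_, rfl⟩
    have hqd : (J - I) * q = b - a := by rw [hq, mul_inv_cancel_left₀ hne]
    have ea : a = p + I * q := by rw [hp]; abel
    have eb : b = p + J * q := by
      have : b = a + (J - I) * q := by rw [hqd]; abel
      rw [this, ea, sub_mul]; abel
    have e1 : J * b - I * a = (J - I) * p := by
      rw [ea, eb, mul_add, mul_add, ← mul_assoc, ← mul_assoc, hII, hJJ, sub_mul]; abel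
    rw [e1, inv_mul_cancel_left₀ hne, ← hq, ← hp]
    have e2 : I * a - I * p = -q := by
      rw [ea, mul_add, ← mul_assoc, hII]; simp
    rw [e2, mul_sub, mul_add, ← mul_assoc K K q, hKK]
    simp only [neg_mul, one_mul]
    abel
  · rintro x - hx
    simp only [PsiI_real _ x hx]
    simp

lemma sliceRegular_pathSlice {n : ℕ} {Ω : Set (Fin n → ℍ)} (hΩ : sliceOpen n Ω)
    {f : (Fin n → ℍ) → ℍ} (hf : SliceRegular n Ω f) : ∃ F, isStemOf n Ω f F := by
  have key : ∀ γ : ℝ → Fin n → ℂ, ∃ F : ℍ × ℍ, γ ∈ PathsIn n Ω →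
      ∀ I ∈ sliceUnits n Ω γ, f (PsiI n I (γ 1)) = F.1 + I * F.2 := by
    intro γ
    by_cases hnt : (sliceUnits n Ω γ).Nontrivial
    · obtain ⟨I, hI, J, hJ, hIJ⟩ := hnt
      refine ⟨(_, _), fun hγ K hK => three_units hΩ hf γ hγ.1 hI hJ hK hIJ⟩
    · rw [Set.not_nontrivial_iff] at hnt
      by_cases hγ : γ ∈ PathsIn n Ω
      · obtain ⟨-, I, hI⟩ := hγ
        refine ⟨(f (PsiI n I (γ 1)), 0), fun _ K hK => ?_⟩
        rw [hnt hK hI]; simp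
      · exact ⟨0, fun h => absurd h hγ⟩
  choose F hF using key
  exact ⟨F, fun γ hγ => hF γ hγ⟩

lemma stemF_isStem {n : ℕ} {Ω : Set (Fin n → ℍ)} (hΩ : sliceOpen n Ω)
    {f : (Fin n → ℍ) → ℍ} (hf : SliceRegular n Ω f) : isStemOf n Ω f (stemF n Ω f) := by
  have h := sliceRegular_pathSlice hΩ hf
  rw [stemF, dif_pos h]
  exact h.choose_spec

end helpers

theorem statement3 (n : ℕ) (hn : 1 ≤ n) (Ω₁ Ω₂ : Set (Fin n → ℍ))
    (hΩ₁ : sliceOpen n Ω₁) (hrc : realPathConnected n Ω₁)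
    (hΩ₂ : sliceOpen n Ω₂) (hsp : stemPreserving n Ω₁ Ω₂)
    (γ : ℝ → Fin n → ℂ) (hγ : γ ∈ PathsIn n Ω₁)
    (f : (Fin n → ℍ) → ℍ) (hf : SliceRegular n Ω₂ f)
    (r₁ : ℝ) (hr₁ : 0 < r₁)
    (hlt : ENNReal.ofReal r₁ < min (r2Slice n Ω₂ γ) (rPath n Ω₁ γ))
    (I J : ℍ) (hI : I ∈ sliceUnits n Ω₂ γ) (hJ : J ∈ sliceUnits n Ω₂ γ) (hIJ : I ≠ J)
    (hball : pathBall n γ r₁ ⊆ PathsIn n Ω₁)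
    (hβ : ∀ β ∈ pathBall n γ r₁, pathInSlice n Ω₂ I β ∧ pathInSlice n Ω₂ J β) :
    ∀ z ∈ Metric.ball (γ 1) r₁,
      (stemF n Ω₂ f (extendPath n γ z)).2
          = (J - I)⁻¹ * (f (PsiI n J z) - f (PsiI n I z)) ∧
      (stemF n Ω₂ f (extendPath n γ z)).1
          = f (PsiI n I z) - I * (stemF n Ω₂ f (extendPath n γ z)).2 ∧
      f (PsiI n I z) = (stemF n Ω₂ f (extendPath n γ z)).1
          + I * (stemF n Ω₂ f (extendPath n γ z)).2 ∧
      f (PsiI n J z) = (stemF n Ω₂ f (extendPath n γ z)).1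
          + J * (stemF n Ω₂ f (extendPath n γ z)).2 := by
  intro z hz
  have hmem : extendPath n γ z ∈ pathBall n γ r₁ := ⟨z, hz, rfl⟩
  obtain ⟨hbI, hbJ⟩ := hβ _ hmem
  have hin : extendPath n γ z ∈ PathsIn n Ω₂ := ⟨(hball hmem).1, I, hI.1, hbI⟩
  have h1 : extendPath n γ z 1 = z := by
    funext l
    norm_num [extendPath, concatP, segPath]
  have eI := stemF_isStem hΩ₂ hf _ hin I ⟨hI.1, hbI⟩
  have eJ := stemF_isStem hΩ₂ hf _ hin J ⟨hJ.1, hbJ⟩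
  rw [h1] at eI eJ
  have hne : J - I ≠ 0 := sub_ne_zero.2 hIJ.symm
  refine ⟨?_, ?_, eI, eJ⟩
  · rw [eI, eJ, eq_inv_mul_iff_mul_eq₀ hne, sub_mul]
    abel
  · rw [eI]; abel
end

section
/- Fix an integer n ≥ 1. Let Ω₁ ∈ τ_s(ℍ_s^n) be real-path-connected, let Ω₂ ∈ τ_s(ℍ_s^n) be Ω₁-stem-preserving, and let f ∈ 𝒮ℛ(Ω₂). Then the stem function F_{Ω₁}^f : 𝒫(ℂ^n, Ω₁) → ℍ^{2×1} is holomorphic on 𝒫(ℂ^n, Ω₁), i.e. for every γ ∈ 𝒫(ℂ^n, Ω₁) there exists r > 0 with B_{𝒫(ℂ^n)}(γ, r) ⊆ 𝒫(ℂ^n, Ω₁) such that (∂/∂x_ℓ + σ·∂/∂y_ℓ)(F_{Ω₁}^f ∘ 𝓛_γ)(x + yi) = 0 for every x + yi ∈ B_{ℂ^n}(γ(1), r) and every ℓ ∈ {1,…,n}. -/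
open scoped ENNReal NNReal

theorem aux_extend_one (n : ℕ) (γ : ℝ → Fin n → ℂ) (z : Fin n → ℂ) :
    extendPath n γ z 1 = z := by
  have h : ¬ ((1 : ℝ) ≤ 1 / 2) := by norm_num
  simp only [extendPath, concatP, segPath, if_neg h]
  norm_num

theorem aux_extend_mem (n : ℕ) (γ : ℝ → Fin n → ℂ) (hγ : γ ∈ PathsC n) (z : Fin n → ℂ) :
    extendPath n γ z ∈ PathsC n := by
  obtain ⟨hc, h0⟩ := hγ
  constructor
  · have hcont : Continuous (fun t : ℝ => if t ≤ 1 / 2 then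
        Set.IccExtend (zero_le_one (α := ℝ)) ((Set.Icc (0:ℝ) 1).domRestrict γ) (2 * t)
        else segPath n (γ 1) z (2 * t - 1)) := by
      apply Continuous.if_le
      · exact (hc.domRestrict.Icc_extend').comp (by fun_prop)
      · unfold segPath; fun_prop
      · fun_prop
      · fun_prop
      · intro t ht
        subst ht
        have : (2 * (1 / 2) : ℝ) = 1 := by norm_num
        rw [this, Set.IccExtend_right]
        simp [segPath]
    refine hcont.continuousOn.congr ?_
    intro t ht
    simp only [extendPath, concatP]
    split_ifs with h
    · rw [Set.IccExtend_of_mem _ _ (⟨by linarith [ht.1], by linarith⟩ : 2 * t ∈ Set.Icc (0:ℝ) 1)]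
      rfl
    · rfl
  · intro ℓ
    simpa [extendPath, concatP] using h0 ℓ

theorem aux_extend_units (n : ℕ) (Ω : Set (Fin n → ℍ)) (γ : ℝ → Fin n → ℂ) (I : ℍ)
    (hI : I ∈ sliceUnits n Ω γ) (r : ℝ)
    (hball : Metric.ball (γ 1) r ⊆ PsiI n I ⁻¹' Ω) (z : Fin n → ℂ)
    (hz : z ∈ Metric.ball (γ 1) r) : I ∈ sliceUnits n Ω (extendPath n γ z) := by
  refine ⟨hI.1, fun t ht => ?_⟩
  simp only [extendPath, concatP]
  split_ifs with h
  · exact hI.2 _ ⟨by linarith [ht.1], by linarith⟩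
  · have hr : 0 < r := lt_of_le_of_lt dist_nonneg hz
    apply hball
    push Not at h
    exact (convex_ball (γ 1) r) (Metric.mem_ball_self hr) hz
      (by linarith [ht.2]) (by linarith) (by ring)

theorem aux_radius (n : ℕ) (Ω : Set (Fin n → ℍ)) (hΩ : sliceOpen n Ω) (γ : ℝ → Fin n → ℂ)
    (I : ℍ) (hI : I ∈ sliceUnits n Ω γ) :
    ∃ r : ℝ, 0 < r ∧ Metric.ball (γ 1) r ⊆ PsiI n I ⁻¹' Ω :=
  Metric.isOpen_iff.1 (hΩ.2 I hI.1) (γ 1) (hI.2 1 ⟨zero_le_one, le_rfl⟩)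

theorem aux_CR (n : ℕ) (Ω : Set (Fin n → ℍ)) (hΩ : sliceOpen n Ω) (f : (Fin n → ℍ) → ℍ)
    (hf : SliceRegular n Ω f) (I : ℍ) (hI : I ∈ QS) (U : Set (Fin n → ℂ)) (hU : IsOpen U)
    (hUΩ : U ⊆ PsiI n I ⁻¹' Ω) (F : (Fin n → ℂ) → ℍ × ℍ) (hF : DifferentiableOn ℝ F U)
    (heq : ∀ z ∈ U, f (PsiI n I z) = (F z).1 + I * (F z).2)
    (z : Fin n → ℂ) (hz : z ∈ U) (ℓ : Fin n) :
    ((fderivWithin ℝ F U z (Pi.single ℓ 1)).1 - (fderivWithin ℝ F U z (Pi.single ℓ Complex.I)).2)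
    + I * ((fderivWithin ℝ F U z (Pi.single ℓ 1)).2
      + (fderivWithin ℝ F U z (Pi.single ℓ Complex.I)).1) = 0 := by
  have h := (hf I hI).2 z (hUΩ hz) ℓ
  have hFz : HasFDerivAt F (fderivWithin ℝ F U z) z :=
    (hF z hz).hasFDerivWithinAt.hasFDerivAt (hU.mem_nhds hz)
  have hd : HasFDerivAt (fun z => f (PsiI n I z))
      (((ContinuousLinearMap.fst ℝ ℍ ℍ) + (ContinuousLinearMap.mul ℝ ℍ I).comp
        (ContinuousLinearMap.snd ℝ ℍ ℍ)).comp (fderivWithin ℝ F U z)) z := by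
    have h1 := (((ContinuousLinearMap.fst ℝ ℍ ℍ) + (ContinuousLinearMap.mul ℝ ℍ I).comp
        (ContinuousLinearMap.snd ℝ ℍ ℍ)).hasFDerivAt (x := F z)).comp z hFz
    refine h1.congr_of_eventuallyEq ?_
    filter_upwards [hU.mem_nhds hz] with w hw
    simpa using heq w hw
  have hfd : fderivWithin ℝ (fun z => f (PsiI n I z)) (PsiI n I ⁻¹' Ω) z = _ :=
    (fderivWithin_of_isOpen (hΩ.2 I hI) (hUΩ hz)).trans hd.fderiv
  rw [hfd] at h
  simp only [ContinuousLinearMap.comp_apply, add_apply,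
    ContinuousLinearMap.coe_fst', ContinuousLinearMap.coe_snd',
    ContinuousLinearMap.mul_apply'] at h
  have hI2 : I * I = -1 := by rw [← pow_two]; exact hI
  rw [← h, mul_add I (fderivWithin ℝ F U z (Pi.single ℓ Complex.I)).1, ← mul_assoc, hI2]
  noncomm_ring

theorem statement4 (n : ℕ) (hn : 1 ≤ n) (Ω₁ Ω₂ : Set (Fin n → ℍ))
    (hΩ₁ : sliceOpen n Ω₁) (hrc : realPathConnected n Ω₁)
    (hΩ₂ : sliceOpen n Ω₂) (hsp : stemPreserving n Ω₁ Ω₂)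
    (f : (Fin n → ℍ) → ℍ) (hf : SliceRegular n Ω₂ f) :
    ∀ γ ∈ PathsIn n Ω₁, ∃ r : ℝ, 0 < r ∧ pathBall n γ r ⊆ PathsIn n Ω₁ ∧
      DifferentiableOn ℝ (fun z => stemF n Ω₂ f (extendPath n γ z)) (Metric.ball (γ 1) r) ∧
      ∀ z ∈ Metric.ball (γ 1) r, ∀ ℓ : Fin n,
        (fderivWithin ℝ (fun z => stemF n Ω₂ f (extendPath n γ z)) (Metric.ball (γ 1) r) z
            (Pi.single ℓ 1)).1
          - (fderivWithin ℝ (fun z => stemF n Ω₂ f (extendPath n γ z)) (Metric.ball (γ 1) r) z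
            (Pi.single ℓ Complex.I)).2 = 0 ∧
        (fderivWithin ℝ (fun z => stemF n Ω₂ f (extendPath n γ z)) (Metric.ball (γ 1) r) z
            (Pi.single ℓ 1)).2
          + (fderivWithin ℝ (fun z => stemF n Ω₂ f (extendPath n γ z)) (Metric.ball (γ 1) r) z
            (Pi.single ℓ Complex.I)).1 = 0 := by
  intro γ hγ
  obtain ⟨I₀, hI₀⟩ := hγ.2
  obtain ⟨r₀, hr₀, hb₀⟩ := aux_radius n Ω₁ hΩ₁ γ I₀ hI₀
  obtain ⟨I, hI, J, hJ, hIJ⟩ := hsp.1 γ hγ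
  obtain ⟨r₁, hr₁, hb₁⟩ := aux_radius n Ω₂ hΩ₂ γ I hI
  obtain ⟨r₂, hr₂, hb₂⟩ := aux_radius n Ω₂ hΩ₂ γ J hJ
  refine ⟨min r₀ (min r₁ r₂), by positivity, ?_, ?_⟩
  · rintro β ⟨z, hz, rfl⟩
    exact ⟨aux_extend_mem n γ hγ.1 z, I₀, aux_extend_units n Ω₁ γ I₀ hI₀ r₀ hb₀ z
      (Metric.ball_subset_ball (min_le_left _ _) hz)⟩
  set U := Metric.ball (γ 1) (min r₀ (min r₁ r₂)) with hUdef
  have hU : IsOpen U := Metric.isOpen_ball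
  have hU1 : U ⊆ Metric.ball (γ 1) r₁ :=
    Metric.ball_subset_ball ((min_le_right _ _).trans (min_le_left _ _))
  have hU2 : U ⊆ Metric.ball (γ 1) r₂ :=
    Metric.ball_subset_ball ((min_le_right _ _).trans (min_le_right _ _))
  by_cases hex : ∃ F, isStemOf n Ω₂ f F
  swap
  · simp [stemF, dif_neg hex]
  have hstem : isStemOf n Ω₂ f (stemF n Ω₂ f) := by
    rw [stemF, dif_pos hex]; exact hex.choose_spec
  set F : (Fin n → ℂ) → ℍ × ℍ := fun z => stemF n Ω₂ f (extendPath n γ z) with hFdef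
  have heI : ∀ z ∈ U, f (PsiI n I z) = (F z).1 + I * (F z).2 := by
    intro z hz
    have hu := aux_extend_units n Ω₂ γ I hI r₁ hb₁ z (hU1 hz)
    have := hstem _ ⟨aux_extend_mem n γ hγ.1 z, I, hu⟩ I hu
    rwa [aux_extend_one] at this
  have heJ : ∀ z ∈ U, f (PsiI n J z) = (F z).1 + J * (F z).2 := by
    intro z hz
    have hu := aux_extend_units n Ω₂ γ J hJ r₂ hb₂ z (hU2 hz)
    have := hstem _ ⟨aux_extend_mem n γ hγ.1 z, J, hu⟩ J hu
    rwa [aux_extend_one] at this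
  have hne : I - J ≠ 0 := sub_ne_zero.2 hIJ
  have hdI : DifferentiableOn ℝ (fun z => f (PsiI n I z)) U :=
    (hf I hI.1).1.mono (hU1.trans hb₁)
  have hdJ : DifferentiableOn ℝ (fun z => f (PsiI n J z)) U :=
    (hf J hJ.1).1.mono (hU2.trans hb₂)
  have hd2 : DifferentiableOn ℝ
      (fun z => (I - J)⁻¹ * (f (PsiI n I z) - f (PsiI n J z))) U :=
    (hdI.sub hdJ).const_mul _
  have hF2 : ∀ z ∈ U, (F z).2 = (I - J)⁻¹ * (f (PsiI n I z) - f (PsiI n J z)) := by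
    intro z hz
    rw [heI z hz, heJ z hz, add_sub_add_left_eq_sub, ← sub_mul, ← mul_assoc,
      inv_mul_cancel₀ hne, one_mul]
  have hFd : DifferentiableOn ℝ F U := by
    refine ((hdI.sub (hd2.const_mul I)).prodMk hd2).congr ?_
    intro z hz
    refine Prod.ext ?_ (hF2 z hz)
    change (F z).1 = f (PsiI n I z) - I * ((I - J)⁻¹ * (f (PsiI n I z) - f (PsiI n J z)))
    rw [← hF2 z hz, heI z hz, add_sub_cancel_right]
  refine ⟨hFd, fun z hz ℓ => ?_⟩
  have hcI := aux_CR n Ω₂ hΩ₂ f hf I hI.1 U hU (hU1.trans hb₁) F hFd heI z hz ℓ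
  have hcJ := aux_CR n Ω₂ hΩ₂ f hf J hJ.1 U hU (hU2.trans hb₂) F hFd heJ z hz ℓ
  have hB : (fderivWithin ℝ F U z (Pi.single ℓ 1)).2
      + (fderivWithin ℝ F U z (Pi.single ℓ Complex.I)).1 = 0 := by
    have h := congrArg₂ (fun a b => a - b) hcI hcJ
    simp only [add_sub_add_left_eq_sub, ← sub_mul, sub_zero] at h
    exact (mul_eq_zero.1 h).resolve_left hne
  rw [hB, mul_zero, add_zero] at hcI
  exact ⟨hcI, hB⟩
end

section
/- Fix an integer n ≥ 1. Let Ω₁ ∈ τ_s(ℍ_s^n) be real-path-connected, let Ω₂ ∈ τ_s(ℍ_s^n) be Ω₁-stem-preserving, and let f : Ω₁ → ℍ and g : Ω₂ → ℍ be path-slice. Then for every γ ∈ 𝒫(ℂ^n, Ω₁), every I ∈ 𝕊(Ω₁, γ), every r with 0 < r < r^I_{γ,Ω₁}, and every z ∈ B_{ℂ^n}(γ(1), r), one has (f*g)(Ψ_i^I(z)) = (f(Ψ_i^I(z)), I·f(Ψ_i^I(z)))·(F_{Ω₁}^g ∘ 𝓛_γ)(z). -/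
open scoped ENNReal NNReal

lemma aux_unit {I : ℍ} (hI : I ∈ QS) : I.re = 0 ∧ ‖I‖ = 1 := by
  have h : I ^ 2 = -1 := hI
  have h1 : Quaternion.normSq I = 1 := by
    have := congrArg Quaternion.normSq h
    rw [map_pow, Quaternion.normSq_neg, map_one] at this
    nlinarith [Quaternion.normSq_nonneg (a := I)]
  refine ⟨?_, ?_⟩
  · rw [← Quaternion.sq_eq_neg_normSq, h, h1]; simp
  · have := Quaternion.normSq_eq_norm_mul_self I
    rw [h1] at this
    nlinarith [norm_nonneg I]

lemma aux_im {I : ℍ} (hI : I ∈ QS) (x y : ℝ) :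
    Quaternion.im (algebraMap ℝ ℍ x + y • I) = y • I := by
  have h := (aux_unit hI).1
  ext <;> simp [h, Quaternion.algebraMap_def]

lemma aux_ne {I : ℍ} (hI : I ∈ QS) : I ≠ 0 := by
  intro h; have := (aux_unit hI).2; simp [h] at this

lemma aux_neg {I : ℍ} (hI : I ∈ QS) : -I ∈ QS := by
  have h : I ^ 2 = -1 := hI
  show (-I) ^ 2 = -1
  rw [neg_sq, h]

lemma aux_im_Psi {n : ℕ} {I : ℍ} (hI : I ∈ QS) (z : Fin n → ℂ) (l : Fin n) :
    Quaternion.im (PsiI n I z l) = (z l).im • I := aux_im hI _ _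

lemma aux_Psi_inj {n : ℕ} {I : ℍ} (hI : I ∈ QS) {z w : Fin n → ℂ}
    (h : PsiI n I z = PsiI n I w) : z = w := by
  have hr := (aux_unit hI).1
  funext l
  have h1 := congrFun h l
  have h2 := aux_im_Psi hI z l
  rw [h1, aux_im_Psi hI w l] at h2
  have h3 := smul_left_injective ℝ (aux_ne hI) h2
  have h4 := congrArg (fun q : ℍ => q.re) h1
  simp [PsiI, hr, Quaternion.algebraMap_def] at h4
  exact Complex.ext h4 h3.symm

lemma aux_Psi_conj {n : ℕ} (I : ℍ) (z : Fin n → ℂ) :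
    PsiI n I (fun l => starRingEnd ℂ (z l)) = PsiI n (-I) z := by
  funext l; simp [PsiI]

lemma aux_scrI_zero {n : ℕ} {I : ℍ} (hI : I ∈ QS) {z : Fin n → ℂ} (hz : ∀ l, (z l).im = 0) :
    scrI (PsiI n I z) = 0 := by
  unfold scrI
  rw [dif_neg]
  rintro ⟨l, hl⟩
  simp [aux_im_Psi hI, hz] at hl

lemma aux_scrI {n : ℕ} {I : ℍ} (hI : I ∈ QS) {z : Fin n → ℂ} (hz : ∃ l, (z l).im ≠ 0) :
    scrI (PsiI n I z) = I ∨ scrI (PsiI n I z) = -I := by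
  classical
  unfold scrI
  have hne : (Finset.univ.filter
      fun l : Fin n => Quaternion.im (PsiI n I z l) ≠ 0).Nonempty := by
    obtain ⟨l, hl⟩ := hz
    exact ⟨l, by simp [aux_im_Psi hI, hl, aux_ne hI]⟩
  have key : ∀ l : Fin n, Quaternion.im (PsiI n I z l) ≠ 0 →
      (‖Quaternion.im (PsiI n I z l)‖⁻¹ • Quaternion.im (PsiI n I z l) = I ∨
      ‖Quaternion.im (PsiI n I z l)‖⁻¹ • Quaternion.im (PsiI n I z l) = -I) := by
    intro l hl
    rw [aux_im_Psi hI] at hl ⊢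
    have hy : (z l).im ≠ 0 := fun h => hl (by simp [h])
    rw [norm_smul, (aux_unit hI).2, mul_one, smul_smul, Real.norm_eq_abs]
    rcases lt_or_gt_of_ne hy with h | h
    · right; rw [abs_of_neg h, inv_neg, neg_mul, inv_mul_cancel₀ hy]; simp
    · left; rw [abs_of_pos h, inv_mul_cancel₀ hy]; simp
  have h0 := hne
  rw [dif_pos (by convert hne)]
  apply key
  have := Finset.min'_mem _ hne
  convert (Finset.mem_filter.mp this).2

lemma aux_concat_cont {n : ℕ} {a b : ℝ → Fin n → ℂ}
    (ha : ContinuousOn a (Set.Icc 0 1)) (hb : ContinuousOn b (Set.Icc 0 1)) (h : a 1 = b 0) :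
    ContinuousOn (concatP n a b) (Set.Icc 0 1) := by
  have hu : Set.Icc (0:ℝ) 1 = Set.Icc 0 (1/2) ∪ Set.Icc (1/2) 1 := by
    rw [Set.Icc_union_Icc_eq_Icc] <;> norm_num
  rw [hu]
  apply ContinuousOn.union_of_isClosed _ _ isClosed_Icc isClosed_Icc
  · have : ContinuousOn (fun t : ℝ => a (2 * t)) (Set.Icc 0 (1/2)) :=
      ha.comp (by fun_prop) (fun t ht => ⟨by linarith [ht.1], by linarith [ht.2]⟩)
    exact this.congr (fun t ht => by simp only [concatP]; rw [if_pos ht.2])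
  · have : ContinuousOn (fun t : ℝ => b (2 * t - 1)) (Set.Icc (1/2) 1) :=
      hb.comp (by fun_prop) (fun t ht => ⟨by linarith [ht.1], by linarith [ht.2]⟩)
    refine this.congr (fun t ht => ?_)
    simp only [concatP]
    split_ifs with h1
    · have : t = 1/2 := le_antisymm h1 ht.1
      subst this; norm_num [h]
    · rfl

lemma aux_concat_slice {n : ℕ} {Ω : Set (Fin n → ℍ)} {I : ℍ} {a b : ℝ → Fin n → ℂ}
    (ha : pathInSlice n Ω I a) (hb : pathInSlice n Ω I b) :
    pathInSlice n Ω I (concatP n a b) := by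
  intro t ht
  simp only [concatP]
  split_ifs with h
  · exact ha _ ⟨by linarith [ht.1], by linarith⟩
  · exact hb _ ⟨by linarith, by linarith [ht.2]⟩

lemma aux_concat_slice_left {n : ℕ} {Ω : Set (Fin n → ℍ)} {I : ℍ} {a b : ℝ → Fin n → ℂ}
    (h : pathInSlice n Ω I (concatP n a b)) : pathInSlice n Ω I a := by
  intro t ht
  have := h (t / 2) ⟨by linarith [ht.1], by linarith [ht.2]⟩
  simp only [concatP] at this
  rw [if_pos (by linarith [ht.2])] at this
  convert this using 3; ring

lemma aux_concat_slice_right {n : ℕ} {Ω : Set (Fin n → ℍ)} {I : ℍ} {a b : ℝ → Fin n → ℂ}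
    (hab : a 1 = b 0)
    (h : pathInSlice n Ω I (concatP n a b)) : pathInSlice n Ω I b := by
  intro t ht
  have := h ((t + 1) / 2) ⟨by linarith [ht.1], by linarith [ht.2]⟩
  simp only [concatP] at this
  split_ifs at this with h1
  · have h0 : t = 0 := le_antisymm (by linarith) ht.1
    subst h0
    norm_num [hab] at this
    exact this
  · convert this using 3; ring

/-- Two paths in the same slice of `Ω₁` with the same end point have at least two common units. -/
lemma aux_common {n : ℕ} {Ω₁ Ω₂ : Set (Fin n → ℍ)} (hsp : stemPreserving n Ω₁ Ω₂)
    {I : ℍ} (hI : I ∈ QS) {a b : ℝ → Fin n → ℂ} (ha : a ∈ PathsC n) (hb : b ∈ PathsC n)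
    (hai : pathInSlice n Ω₁ I a) (hbi : pathInSlice n Ω₁ I b) (hab : a 1 = b 1) :
    (sliceUnits n Ω₂ a ∩ sliceUnits n Ω₂ b).Nontrivial := by
  have hab' : a 1 = (fun t => b (1 - t)) 0 := by simp [hab]
  have hrev : ∀ {Ω : Set (Fin n → ℍ)} {K : ℍ} {c : ℝ → Fin n → ℂ}, pathInSlice n Ω K c →
      pathInSlice n Ω K (fun t => c (1 - t)) := fun h t ht =>
    h _ ⟨by linarith [ht.2], by linarith [ht.1]⟩
  have hc : concatP n a (fun t => b (1 - t)) ∈ PathsIn n Ω₁ := by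
    refine ⟨⟨aux_concat_cont ha.1 ?_ hab', ?_⟩, I, hI, aux_concat_slice hai (hrev hbi)⟩
    · exact hb.1.comp (by fun_prop) (fun t ht => ⟨by linarith [ht.2], by linarith [ht.1]⟩)
    · intro l; simpa [concatP] using ha.2 l
  refine (hsp.1 _ hc).mono fun K hK => ⟨⟨hK.1, aux_concat_slice_left hK.2⟩, hK.1, ?_⟩
  have := hrev (aux_concat_slice_right hab' hK.2)
  simpa using this

lemma aux_stem {n : ℕ} {Ω₂ : Set (Fin n → ℍ)} {g : (Fin n → ℍ) → ℍ}
    (hg : PathSliceFn n Ω₂ g) : isStemOf n Ω₂ g (stemF n Ω₂ g) := by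
  have h : ∃ F, isStemOf n Ω₂ g F := hg
  unfold stemF
  rw [dif_pos h]
  exact h.choose_spec

lemma aux_solve {J K a b c d : ℍ} (hJK : J ≠ K) (h1 : a + J * b = c + J * d)
    (h2 : a + K * b = c + K * d) : a = c ∧ b = d := by
  have h : (J - K) * (b - d) = 0 := by
    have : (J - K) * (b - d) = ((a + J * b) - (c + J * d)) - ((a + K * b) - (c + K * d)) := by
      noncomm_ring
    rw [this, h1, h2]; simp
  have hb : b = d := by
    rcases mul_eq_zero.mp h with h | h
    · exact absurd (sub_eq_zero.mp h) hJK
    · exact sub_eq_zero.mp h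
  subst hb
  exact ⟨add_right_cancel h1, rfl⟩

lemma aux_Psi_real {n : ℕ} {z : Fin n → ℂ} (hz : ∀ l, (z l).im = 0) (I J : ℍ) :
    PsiI n I z = PsiI n J z := by
  funext l; simp [PsiI, hz]

lemma aux_extend {n : ℕ} {Ω : Set (Fin n → ℍ)} {γ : ℝ → Fin n → ℂ} {I : ℍ} {r : ℝ}
    (hγ : γ ∈ PathsC n) (hI : pathInSlice n Ω I γ)
    (hrI : ENNReal.ofReal r < rISlice n Ω γ I) {z : Fin n → ℂ} (hz : z ∈ Metric.ball (γ 1) r) :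
    extendPath n γ z ∈ PathsC n ∧ pathInSlice n Ω I (extendPath n γ z) ∧
      extendPath n γ z 1 = z := by
  obtain ⟨x, ⟨s, rfl, hs⟩, hrs⟩ := lt_sSup_iff.mp hrI
  have hlt : r < s := by
    by_contra hcon
    push Not at hcon
    have := ENNReal.ofReal_le_ofReal hcon
    rw [ENNReal.ofReal_coe_nnreal] at this
    exact absurd hrs (not_lt.mpr this)
  have hzs : z ∈ Metric.ball (γ 1) (s : ℝ) := Metric.ball_subset_ball hlt.le hz
  have h0 : 0 < (s : ℝ) := Metric.pos_of_mem_ball hzs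
  refine ⟨⟨aux_concat_cont hγ.1 ?_ ?_, ?_⟩, aux_concat_slice hI ?_, ?_⟩
  · unfold segPath; fun_prop
  · simp [segPath]
  · intro l; simpa [extendPath, concatP] using hγ.2 l
  · intro t ht
    apply hs
    exact (convex_ball (γ 1) (s : ℝ)) (Metric.mem_ball_self h0) hzs (by linarith [ht.2]) ht.1
      (by ring)
  · norm_num [extendPath, concatP, segPath]

theorem statement6 (n : ℕ) (hn : 1 ≤ n) (Ω₁ Ω₂ : Set (Fin n → ℍ))
    (hΩ₁ : sliceOpen n Ω₁) (hrc : realPathConnected n Ω₁)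
    (hΩ₂ : sliceOpen n Ω₂) (hsp : stemPreserving n Ω₁ Ω₂)
    (f g : (Fin n → ℍ) → ℍ) (hf : PathSliceFn n Ω₁ f) (hg : PathSliceFn n Ω₂ g)
    (γ : ℝ → Fin n → ℂ) (hγ : γ ∈ PathsIn n Ω₁) (I : ℍ) (hI : I ∈ sliceUnits n Ω₁ γ)
    (r : ℝ) (hr : 0 < r) (hrI : ENNReal.ofReal r < rISlice n Ω₁ γ I)
    (z : Fin n → ℂ) (hz : z ∈ Metric.ball (γ 1) r) :
    starProd n Ω₁ Ω₂ f g (PsiI n I z)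
      = f (PsiI n I z) * (stemF n Ω₂ g (extendPath n γ z)).1
        + I * f (PsiI n I z) * (stemF n Ω₂ g (extendPath n γ z)).2 := by
  obtain ⟨hβC, hβI, hβ1⟩ := aux_extend hγ.1 hI.2 hrI hz
  have hIS := hI.1
  have hst := aux_stem hg
  set β := extendPath n γ z with hβ
  have hβP : β ∈ PathsIn n Ω₁ := ⟨hβC, I, hIS, hβI⟩
  by_cases hzr : ∀ l, (z l).im = 0
  · obtain ⟨J, hJ, K, hK, hJK⟩ := hsp.1 β hβP
    have hJ' := hst β ⟨hβC, J, hJ⟩ J hJ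
    have hK' := hst β ⟨hβC, J, hJ⟩ K hK
    rw [hβ1, aux_Psi_real hzr J I] at hJ'
    rw [hβ1, aux_Psi_real hzr K I] at hK'
    obtain ⟨e1, e2⟩ := aux_solve (a := g (PsiI n I z)) (b := 0) hJK
      (by simpa using hJ') (by simpa using hK')
    have hF : scrF n Ω₁ Ω₂ g (PsiI n I z) = (g (PsiI n I z), 0) := by
      unfold scrF
      rw [dif_neg]
      rintro ⟨⟨l, hl⟩, -⟩
      simp [aux_im_Psi hIS, hzr] at hl
    simp only [starProd, hF, ← e1, ← e2, mul_zero]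
  · push Not at hzr
    have him : ∃ l, Quaternion.im (PsiI n I z l) ≠ 0 := by
      obtain ⟨l, hl⟩ := hzr
      exact ⟨l, by simp [aux_im_Psi hIS, hl, aux_ne hIS]⟩
    have hconjC : ∀ a ∈ PathsC n, conjPath n a ∈ PathsC n := by
      intro a ha
      refine ⟨?_, fun l => by simp [conjPath, ha.2 l]⟩
      apply continuousOn_pi.mpr
      intro l
      exact Complex.continuous_conj.comp_continuousOn (continuousOn_pi.mp ha.1 l)
    have hconj : ∀ (Ω : Set (Fin n → ℍ)) (K : ℍ) (a : ℝ → Fin n → ℂ),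
        pathInSlice n Ω K (conjPath n a) ↔ pathInSlice n Ω (-K) a := by
      intro Ω K a
      unfold pathInSlice
      refine forall₂_congr fun t _ => ?_
      rw [← aux_Psi_conj]; rfl
    have hex : ∃ a, a ∈ PathsIn n Ω₁ ∧ pathInSlice n Ω₁ (scrI (PsiI n I z)) a ∧
        PsiI n (scrI (PsiI n I z)) (a 1) = PsiI n I z := by
      rcases aux_scrI hIS hzr with h | h <;> rw [h]
      · exact ⟨β, hβP, hβI, by rw [hβ1]⟩
      · have h1 : pathInSlice n Ω₁ (-I) (conjPath n β) := by
          rw [hconj, neg_neg]; exact hβI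
        refine ⟨conjPath n β, ⟨hconjC β hβC, -I, aux_neg hIS, h1⟩, h1, ?_⟩
        have := aux_Psi_conj (-I) (β 1)
        rw [neg_neg] at this
        rw [← hβ1, ← this]
        rfl
    obtain ⟨a, ⟨haP, haI, ha1⟩, hF⟩ : ∃ a, (a ∈ PathsIn n Ω₁ ∧
        pathInSlice n Ω₁ (scrI (PsiI n I z)) a ∧
        PsiI n (scrI (PsiI n I z)) (a 1) = PsiI n I z) ∧
        scrF n Ω₁ Ω₂ g (PsiI n I z) = stemF n Ω₂ g a := by
      refine ⟨hex.choose, hex.choose_spec, ?_⟩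
      unfold scrF
      rw [dif_pos ⟨him, hex⟩]
    simp only [starProd, hF]
    rcases aux_scrI hIS hzr with h | h <;> rw [h] at haI ha1 ⊢
    · have haz : a 1 = z := aux_Psi_inj hIS ha1
      obtain ⟨J, hJ, K, hK, hJK⟩ := aux_common hsp hIS haP.1 hβC haI hβI (by rw [haz, hβ1])
      have key : ∀ L ∈ sliceUnits n Ω₂ a ∩ sliceUnits n Ω₂ β,
          (stemF n Ω₂ g a).1 + L * (stemF n Ω₂ g a).2
            = (stemF n Ω₂ g β).1 + L * (stemF n Ω₂ g β).2 := by
        intro L hL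
        rw [← hst a ⟨haP.1, L, hL.1⟩ L hL.1, ← hst β ⟨hβC, L, hL.2⟩ L hL.2, haz, hβ1]
      obtain ⟨e1, e2⟩ := aux_solve hJK (key J hJ) (key K hK)
      rw [e1, e2]
    · have haI' : pathInSlice n Ω₁ I (conjPath n a) := (hconj _ _ _).mpr haI
      have haz : conjPath n a 1 = z := by
        apply aux_Psi_inj hIS
        rw [← ha1]; exact aux_Psi_conj I (a 1)
      obtain ⟨J, hJ, K, hK, hJK⟩ := aux_common hsp hIS (hconjC a haP.1) hβC haI' hβI
        (by rw [haz, hβ1])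
      have key : ∀ L ∈ sliceUnits n Ω₂ (conjPath n a) ∩ sliceUnits n Ω₂ β,
          (stemF n Ω₂ g a).1 + L * (-(stemF n Ω₂ g a).2)
            = (stemF n Ω₂ g β).1 + L * (stemF n Ω₂ g β).2 := by
        intro L hL
        have hL' : -L ∈ sliceUnits n Ω₂ a := ⟨aux_neg hL.1.1, (hconj _ _ _).mp hL.1.2⟩
        have h1 := hst a ⟨haP.1, _, hL'⟩ _ hL'
        rw [← hst β ⟨hβC, L, hL.2⟩ L hL.2, hβ1, ← haz, mul_neg, ← neg_mul, ← h1]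
        exact congrArg g (aux_Psi_conj L (a 1)).symm
      obtain ⟨e1, e2⟩ := aux_solve hJK (key J hJ) (key K hK)
      rw [← e1, ← e2]
      simp
end
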